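/- There is a constant D_n such that for every r > 0, the Haar probability measure of the set of unimodular lattices Λ ∈ X_n containing a nonzero vector of Euclidean norm less than e^{-r} is at most D_n e^{-nr}. -/

import Mathlib

open MeasureTheory Filter Matrix Real ENNReal

noncomputable section

/-- `SL(n, ℝ)`. -/
abbrev SLR (n : ℕ) := Matrix.SpecialLinearGroup (Fin n) ℝ

instance (n : ℕ) : TopologicalSpace (SLR n) :=
  TopologicalSpace.induced (fun g => (g : Matrix (Fin n) (Fin n) ℝ)) inferInstance

/-- The image of `SL(n, ℤ)` in `SL(n, ℝ)`. -/
def latticeGamma (n : ℕ) : Subgroup (SLR n) :=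
  (Matrix.SpecialLinearGroup.map (n := Fin n) (Int.castRingHom ℝ)).range

/-- The space of unimodular lattices `X_n = SL(n,ℝ)/SL(n,ℤ)`. -/
abbrev LatticeSpace (n : ℕ) := SLR n ⧸ latticeGamma n

instance (n : ℕ) : MeasurableSpace (LatticeSpace n) := borel _

/-- The real vector `g · m` of the lattice `g ℤⁿ` coming from the integer vector `m`. -/
def vecOf (n : ℕ) (g : SLR n) (m : Fin n → ℤ) : Fin n → ℝ :=
  (g : Matrix (Fin n) (Fin n) ℝ).mulVec (fun i => (m i : ℝ))

/-- Euclidean norm on `Fin n → ℝ`. -/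
def eNorm {n : ℕ} (v : Fin n → ℝ) : ℝ := ‖(WithLp.equiv 2 (Fin n → ℝ)).symm v‖

/-- The lattice `Λ` contains a nonzero vector lying in `A`. -/
def Intersects (n : ℕ) (Λ : LatticeSpace n) (A : Set (Fin n → ℝ)) : Prop :=
  ∀ g : SLR n, (QuotientGroup.mk g : LatticeSpace n) = Λ →
    ∃ m : Fin n → ℤ, m ≠ 0 ∧ vecOf n g m ∈ A

/-- `α₁(Λ) = sup_{0 ≠ v ∈ Λ} 1/‖v‖` (Euclidean norm). -/
def alpha1 (n : ℕ) (Λ : LatticeSpace n) : ℝ :=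
  sSup {r : ℝ | ∃ g : SLR n, (QuotientGroup.mk g : LatticeSpace n) = Λ ∧
    ∃ m : Fin n → ℤ, m ≠ 0 ∧ r = 1 / eNorm (vecOf n g m)}

section MatrixMeasure

instance Matrix.realMeasureSpace (m n : ℕ) : MeasureSpace (Matrix (Fin m) (Fin n) ℝ) :=
  inferInstanceAs (MeasureSpace (Fin m → Fin n → ℝ))

instance Matrix.realBorelSpace (m n : ℕ) : BorelSpace (Matrix (Fin m) (Fin n) ℝ) :=
  inferInstanceAs (BorelSpace (Fin m → Fin n → ℝ))

instance Matrix.sigmaFiniteVolume (m n : ℕ) :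
    SigmaFinite (volume : Measure (Matrix (Fin m) (Fin n) ℝ)) :=
  inferInstanceAs (SigmaFinite (volume : Measure (Fin m → Fin n → ℝ)))

instance isAddHaarMeasure_volume_pi_pi (m n : ℕ) :
    (volume : Measure (Fin m → Fin n → ℝ)).IsAddHaarMeasure := by
  have : (volume : Measure (Fin n → ℝ)).IsAddHaarMeasure := inferInstance
  exact Measure.pi.isAddHaarMeasure _

instance Matrix.isAddHaarMeasureVolume (m n : ℕ) :
    (volume : Measure (Matrix (Fin m) (Fin n) ℝ)).IsAddHaarMeasure :=
  isAddHaarMeasure_volume_pi_pi m n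

instance Matrix.secondCountableReal (m n : ℕ) :
    SecondCountableTopology (Matrix (Fin m) (Fin n) ℝ) :=
  inferInstanceAs (SecondCountableTopology (Fin m → Fin n → ℝ))

theorem Matrix.measurable_entry {m n : ℕ} (i : Fin m) (j : Fin n) :
    Measurable (fun M : Matrix (Fin m) (Fin n) ℝ => M i j) :=
  (continuous_id.matrix_elem i j).measurable

theorem Matrix.measurable_of_entries {α : Type*} [MeasurableSpace α] {m n : ℕ}
    {f : α → Matrix (Fin m) (Fin n) ℝ} (hf : ∀ i j, Measurable fun x => f x i j) :
    Measurable f :=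
  measurable_pi_lambda (δ := Fin m) (X := fun _ => Fin n → ℝ) f
    fun i => measurable_pi_lambda _ fun j => hf i j

theorem Matrix.measurePreserving_mul_right {m n : ℕ} (A : Matrix (Fin n) (Fin n) ℝ)
    (hA : A.det = 1) :
    MeasurePreserving (fun M : Matrix (Fin m) (Fin n) ℝ => M * A) := by
  have hrow : MeasurePreserving (fun v : Fin n → ℝ => Matrix.toLin' Aᵀ v) volume volume := by
    refine ⟨(LinearMap.continuous_of_finiteDimensional _).measurable, ?_⟩
    rw [Real.map_matrix_volume_pi_eq_smul_volume_pi (by simp [hA])]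
    simp [hA]
  have := volume_preserving_pi (ι := Fin m) (fun _ => hrow)
  refine ⟨?_, ?_⟩
  · exact (continuous_id.matrix_mul continuous_const).measurable
  · have h : (fun M : Matrix (Fin m) (Fin n) ℝ => M * A) =
        fun M i => Matrix.toLin' Aᵀ (M i) := by
      ext M i j
      simp [Matrix.mul_apply, Matrix.mulVec, dotProduct, mul_comm]
    rw [h]
    exact this.map_eq

theorem Matrix.volume_preimage_mul_left {n : ℕ} (A : Matrix (Fin n) (Fin n) ℝ) (hA : A.det ≠ 0)
    (s : Set (Matrix (Fin n) (Fin n) ℝ)) :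
    volume ((fun M => A * M) ⁻¹' s) = ENNReal.ofReal (|A.det⁻¹| ^ n) * volume s := by
  let f : (Fin n → Fin n → ℝ) →ₗ[ℝ] (Fin n → Fin n → ℝ) :=
    { toFun := fun M => A * Matrix.of M
      map_add' := fun x y => Matrix.mul_add A (Matrix.of x) (Matrix.of y)
      map_smul' := fun c x => Matrix.mul_smul A c (Matrix.of x) }
  let e : (Fin n → Fin n → ℝ) ≃ₗ[ℝ] (Fin n → Fin n → ℝ) :=
    { toFun := fun M i j => M j i
      invFun := fun M i j => M j i
      map_add' := fun _ _ => rfl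
      map_smul' := fun _ _ => rfl
      left_inv := fun _ => rfl
      right_inv := fun _ => rfl }
  have hf : f = (e : _ →ₗ[ℝ] _) ∘ₗ
      (LinearMap.pi fun i : Fin n => (Matrix.toLin' A).comp (LinearMap.proj i)) ∘ₗ
        (e.symm : (Fin n → Fin n → ℝ) →ₗ[ℝ] (Fin n → Fin n → ℝ)) := by
    apply LinearMap.ext
    intro M
    ext i j
    change (A * Matrix.of M) i j = _
    simp [e, Matrix.mul_apply, Matrix.mulVec, dotProduct]
  have hdet : LinearMap.det f = A.det ^ n := by
    rw [hf, LinearMap.det_conj, LinearMap.det_pi]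
    simp
  have := Measure.addHaar_preimage_linearMap
    (volume : Measure (Fin n → Fin n → ℝ)) (f := f) (by rw [hdet]; exact pow_ne_zero _ hA) s
  rw [hdet, ← inv_pow, abs_pow] at this
  exact this

/-- The first row and the remaining rows of a matrix, each with its first entry split off. -/
def Matrix.borderCoords {n : ℕ} (M : Matrix (Fin (n + 1)) (Fin (n + 1)) ℝ) :
    (ℝ × (Fin n → ℝ)) × ((Fin n → ℝ) × Matrix (Fin n) (Fin n) ℝ) :=
  ((M 0 0, fun j => M 0 j.succ), (fun i => M i.succ 0, Matrix.of fun i j => M i.succ j.succ))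

theorem Matrix.measurePreserving_borderCoords (n : ℕ) :
    MeasurePreserving (Matrix.borderCoords (n := n)) := by
  have h1 := volume_preserving_piFinSuccAbove (fun _ : Fin (n + 1) => Fin (n + 1) → ℝ) 0
  have h2 := volume_preserving_piFinSuccAbove (fun _ : Fin (n + 1) => ℝ) 0
  have h3 := volume_preserving_pi (ι := Fin n) (fun _ => h2)
  have h4 := volume_measurePreserving_arrowProdEquivProdArrow ℝ (Fin n → ℝ) (Fin n)
  exact (h2.prod (h4.comp h3)).comp h1

end MatrixMeasure

section Core

variable {k : ℕ}

/-- The Schur complement of the top left entry `M 0 0`, with its first row rescaled by `M 0 0` so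
that its determinant is that of `M`. -/
def Matrix.core (M : Matrix (Fin (k + 2)) (Fin (k + 2)) ℝ) :
    Matrix (Fin (k + 1)) (Fin (k + 1)) ℝ :=
  Matrix.diagonal (Fin.cons (M 0 0) 1 : Fin (k + 1) → ℝ) *
    Matrix.of fun i j => M i.succ j.succ - M i.succ 0 * (M 0 j.succ / M 0 0)

theorem Matrix.core_apply (M : Matrix (Fin (k + 2)) (Fin (k + 2)) ℝ) (i j : Fin (k + 1)) :
    M.core i j = (Fin.cons (M 0 0) 1 : Fin (k + 1) → ℝ) i *
      (M i.succ j.succ - M i.succ 0 * (M 0 j.succ / M 0 0)) := by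
  simp [Matrix.core, Matrix.diagonal_mul]

theorem Matrix.det_diagonal_cons_one (a : ℝ) :
    (Matrix.diagonal (Fin.cons a 1 : Fin (k + 1) → ℝ)).det = a := by
  simp [Matrix.det_diagonal, Fin.prod_univ_succ]

theorem Matrix.det_core (M : Matrix (Fin (k + 2)) (Fin (k + 2)) ℝ) (h : M 0 0 ≠ 0) :
    M.core.det = M.det := by
  let N : Matrix (Fin (k + 2)) (Fin (k + 2)) ℝ :=
    Matrix.of fun i j => M i j - (if i = 0 then 0 else M i 0 / M 0 0) * M 0 j
  have hN : M.det = N.det := by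
    refine Matrix.det_eq_of_forall_row_eq_smul_add_const
      (fun i => if i = 0 then 0 else M i 0 / M 0 0) 0 (by simp) fun i j => ?_
    simp [N]
  rw [hN, Matrix.det_succ_column_zero N, Fin.sum_univ_succ, Finset.sum_eq_zero, add_zero]
  · rw [Matrix.core, Matrix.det_mul, Matrix.det_diagonal_cons_one]
    simp only [Fin.val_zero, pow_zero, one_mul]
    congr 1
    · simp [N]
    · congr 1
      ext i j
      simp [N, Fin.succ_ne_zero]
      ring
  · intro i _
    simp [N, Fin.succ_ne_zero, div_mul_cancel₀ _ h]

theorem Matrix.core_diagonal_mul (M : Matrix (Fin (k + 2)) (Fin (k + 2)) ℝ)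
    (d : Fin (k + 2) → ℝ) (h : d 0 ≠ 0) :
    (Matrix.diagonal d * M).core =
      Matrix.diagonal (fun i : Fin (k + 1) => (Fin.cons (d 0) 1 : Fin (k + 1) → ℝ) i * d i.succ) *
        M.core := by
  ext i j
  rw [Matrix.diagonal_mul, Matrix.core_apply, Matrix.core_apply]
  simp only [Matrix.diagonal_mul, mul_div_mul_left _ _ h]
  refine Fin.cases ?_ (fun i => ?_) i
  · simp only [Fin.cons_zero]
    ring
  · simp only [Fin.cons_succ, Pi.one_apply]
    ring

theorem Matrix.measurable_core :
    Measurable (Matrix.core : Matrix (Fin (k + 2)) (Fin (k + 2)) ℝ → _) := by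
  refine Matrix.measurable_of_entries fun i j => ?_
  simp_rw [Matrix.core_apply]
  have hm := fun a b => Matrix.measurable_entry (m := k + 2) (n := k + 2) a b
  refine Measurable.mul ?_
    ((hm _ _).sub ((hm _ _).mul ((hm _ _).div (hm _ _))))
  refine Fin.cases ?_ (fun i => ?_) i
  · simpa using hm 0 0
  · simp

theorem Matrix.volume_core_le (B : Set (Fin (k + 2) → ℝ)) (hB : MeasurableSet B)
    (Y : Set (Fin (k + 1) → ℝ)) (hY : MeasurableSet Y)
    (F : Set (Matrix (Fin (k + 1)) (Fin (k + 1)) ℝ)) (hF : MeasurableSet F) :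
    volume {M : Matrix (Fin (k + 2)) (Fin (k + 2)) ℝ | M 0 0 ≠ 0 ∧ (fun i => M i 0) ∈ B ∧
      (fun j : Fin (k + 1) => M 0 j.succ / M 0 0) ∈ Y ∧ M.core ∈ F} ≤
      volume B * volume Y * volume F := by
  let slice (a : ℝ) (y b : Fin (k + 1) → ℝ) (Z : Matrix (Fin (k + 1)) (Fin (k + 1)) ℝ) :
      Matrix (Fin (k + 1)) (Fin (k + 1)) ℝ :=
    Matrix.diagonal (Fin.cons a 1 : Fin (k + 1) → ℝ) *
      (Z + Matrix.of fun i j => -(b i * (y j / a)))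
  let T : Set ((ℝ × (Fin (k + 1) → ℝ)) × ((Fin (k + 1) → ℝ) ×
      Matrix (Fin (k + 1)) (Fin (k + 1)) ℝ)) :=
    {p | p.1.1 ≠ 0 ∧ (Fin.cons p.1.1 p.2.1 : Fin (k + 2) → ℝ) ∈ B ∧ (fun j => p.1.2 j / p.1.1) ∈ Y ∧
      slice p.1.1 p.1.2 p.2.1 p.2.2 ∈ F}
  have hcons : Measurable fun p : ℝ × (Fin (k + 1) → ℝ) =>
      (Fin.cons p.1 p.2 : Fin (k + 2) → ℝ) := by
    refine measurable_pi_lambda _ fun i => ?_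
    refine Fin.cases ?_ (fun i => ?_) i
    · simpa using measurable_fst
    · simp only [Fin.cons_succ]
      fun_prop
  have hT : MeasurableSet T := by
    refine MeasurableSet.inter ?_ (MeasurableSet.inter ?_ (MeasurableSet.inter ?_ ?_))
    · exact measurable_fst.fst (measurableSet_singleton (0 : ℝ)).compl
    · exact (hcons.comp (measurable_fst.fst.prodMk measurable_snd.fst)) hB
    · refine Measurable.comp (g := fun q : ℝ × (Fin (k + 1) → ℝ) => fun j => q.2 j / q.1) ?_
        measurable_fst hY
      fun_prop
    · refine (Matrix.measurable_of_entries fun i j => ?_ : Measurable _) hF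
      have hm := Matrix.measurable_entry (m := k + 1) (n := k + 1) i j
      simp only [slice, Matrix.diagonal_mul, Matrix.add_apply, Matrix.of_apply]
      refine Measurable.mul ?_ (Measurable.add (hm.comp measurable_snd.snd) ?_)
      · refine Fin.cases ?_ (fun i => ?_) i
        · simpa using measurable_fst.fst
        · simp
      · fun_prop
  have hpre : {M : Matrix (Fin (k + 2)) (Fin (k + 2)) ℝ | M 0 0 ≠ 0 ∧ (fun i => M i 0) ∈ B ∧
      (fun j : Fin (k + 1) => M 0 j.succ / M 0 0) ∈ Y ∧ M.core ∈ F} =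
      Matrix.borderCoords ⁻¹' T := by
    ext M
    have h1 : (Fin.cons (M 0 0) fun i : Fin (k + 1) => M i.succ 0 : Fin (k + 2) → ℝ) =
        fun i => M i 0 := by
      ext i
      refine Fin.cases ?_ (fun i => ?_) i <;> simp
    have h2 : slice (M 0 0) (fun j => M 0 j.succ) (fun i => M i.succ 0)
        (Matrix.of fun i j => M i.succ j.succ) = M.core := by
      ext i j
      simp [slice, Matrix.core, sub_eq_add_neg]
    simp only [Set.mem_ofPred_eq, Set.mem_preimage, T, Matrix.borderCoords, h1, h2]
  have hZ : ∀ (a : ℝ), a ≠ 0 → ∀ y b, volume {Z | slice a y b Z ∈ F} =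
      ENNReal.ofReal (|a⁻¹| ^ (k + 1)) * volume F := by
    intro a ha y b
    have := Matrix.volume_preimage_mul_left
      (Matrix.diagonal (Fin.cons a 1 : Fin (k + 1) → ℝ))
      (by rwa [Matrix.det_diagonal_cons_one]) F
    rw [Matrix.det_diagonal_cons_one] at this
    rw [← this, ← measure_preimage_add_right volume (Matrix.of fun i j => -(b i * (y j / a)))
      ((fun M => Matrix.diagonal (Fin.cons a 1 : Fin (k + 1) → ℝ) * M) ⁻¹' F)]
    rfl
  have hyvol : ∀ a : ℝ, a ≠ 0 → volume {y : Fin (k + 1) → ℝ | (fun j => y j / a) ∈ Y} =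
      ENNReal.ofReal (|a| ^ (k + 1)) * volume Y := by
    intro a ha
    have := Measure.addHaar_preimage_smul (volume : Measure (Fin (k + 1) → ℝ)) (inv_ne_zero ha) Y
    simp only [Module.finrank_fintype_fun_eq_card, Fintype.card_fin, inv_pow, inv_inv, abs_pow]
      at this
    rw [← this]
    congr 1
    ext y
    simp only [Set.mem_ofPred_eq, Set.mem_preimage]
    refine Iff.of_eq (congrArg (· ∈ Y) ?_)
    ext j
    simp [div_eq_inv_mul]
  have hBm : ∀ a, MeasurableSet {b : Fin (k + 1) → ℝ | (Fin.cons a b : Fin (k + 2) → ℝ) ∈ B} :=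
    fun a => (hcons.comp measurable_prodMk_left) hB
  have hYm : ∀ a : ℝ, MeasurableSet {y : Fin (k + 1) → ℝ | (fun j => y j / a) ∈ Y} := fun a =>
    (by fun_prop : Measurable fun y : Fin (k + 1) → ℝ => fun j => y j / a) hY
  rw [hpre, (Matrix.measurePreserving_borderCoords _).measure_preimage hT.nullMeasurableSet]
  have hslice : ∀ p : ℝ × (Fin (k + 1) → ℝ), volume (Prod.mk p ⁻¹' T) ≤
      volume {b : Fin (k + 1) → ℝ | (Fin.cons p.1 b : Fin (k + 2) → ℝ) ∈ B} *
        (({q : ℝ × (Fin (k + 1) → ℝ) | q.1 ≠ 0 ∧ (fun j => q.2 j / q.1) ∈ Y}.indicator 1 p) *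
          (ENNReal.ofReal (|p.1⁻¹| ^ (k + 1)) * volume F)) := by
    rintro ⟨a, y⟩
    by_cases hay : a ≠ 0 ∧ (fun j => y j / a) ∈ Y
    · rw [Set.indicator_of_mem (by exact hay), Pi.one_apply, one_mul, Measure.volume_eq_prod,
        Measure.prod_apply (measurable_prodMk_left hT)]
      calc _ ≤ ∫⁻ b : Fin (k + 1) → ℝ,
            {b : Fin (k + 1) → ℝ | (Fin.cons a b : Fin (k + 2) → ℝ) ∈ B}.indicator
              (fun _ => ENNReal.ofReal (|a⁻¹| ^ (k + 1)) * volume F) b := by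
            refine lintegral_mono fun b => ?_
            by_cases hb : (Fin.cons a b : Fin (k + 2) → ℝ) ∈ B
            · rw [Set.indicator_of_mem (by exact hb), ← hZ a hay.1 y b]
              exact measure_mono fun Z hZ => hZ.2.2.2
            · refine le_of_eq_of_le ?_ zero_le
              convert measure_empty (μ := volume)
              ext Z
              simp only [Set.mem_preimage, Set.mem_ofPred_eq, T, Set.mem_empty_iff_false,
                iff_false]
              exact fun h => hb h.2.1
        _ = _ := by
            rw [lintegral_indicator (hBm a), setLIntegral_const, mul_comm]
    · refine le_of_eq_of_le ?_ zero_le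
      convert measure_empty (μ := volume)
      ext q
      simp only [Set.mem_preimage, Set.mem_ofPred_eq, T, Set.mem_empty_iff_false, iff_false]
      exact fun h => hay ⟨h.1, h.2.2.1⟩
  have hB_split : ∫⁻ a : ℝ, volume {b : Fin (k + 1) → ℝ | (Fin.cons a b : Fin (k + 2) → ℝ) ∈ B} =
      volume B := by
    have h := (volume_preserving_piFinSuccAbove (fun _ : Fin (k + 2) => ℝ) 0).symm
    rw [← h.measure_preimage hB.nullMeasurableSet, Measure.volume_eq_prod,
      Measure.prod_apply (h.measurable hB)]
    refine lintegral_congr fun a => congrArg _ ?_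
    ext b
    simp [Set.mem_preimage, Fin.consEquiv, MeasurableEquiv.piFinSuccAbove]
  have hprod : volume T = ∫⁻ p, volume (Prod.mk p ⁻¹' T) := by
    rw [Measure.volume_eq_prod, Measure.prod_apply hT]
  rw [hprod, Measure.volume_eq_prod,
    lintegral_prod _ (measurable_measure_prodMk_left hT).aemeasurable]
  calc _ ≤ ∫⁻ a : ℝ, volume {b : Fin (k + 1) → ℝ | (Fin.cons a b : Fin (k + 2) → ℝ) ∈ B} *
        (volume Y * volume F) := by
        refine lintegral_mono fun a => (lintegral_mono fun y => hslice (a, y)).trans ?_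
        by_cases ha : a = 0
        · simp [ha]
        · have hind : ∀ y : Fin (k + 1) → ℝ,
              {q : ℝ × (Fin (k + 1) → ℝ) | q.1 ≠ 0 ∧ (fun j => q.2 j / q.1) ∈ Y}.indicator
                (1 : ℝ × (Fin (k + 1) → ℝ) → ℝ≥0∞) (a, y) =
              {y : Fin (k + 1) → ℝ | (fun j => y j / a) ∈ Y}.indicator 1 y := by
            intro y
            by_cases hy : (fun j => y j / a) ∈ Y
            · rw [Set.indicator_of_mem (by exact ⟨ha, hy⟩), Set.indicator_of_mem (by exact hy)]
              rfl
            · rw [Set.indicator_of_notMem (by exact fun h => hy h.2),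
                Set.indicator_of_notMem (by exact hy)]
          simp_rw [hind]
          have hi : Measurable
              ({y : Fin (k + 1) → ℝ | (fun j => y j / a) ∈ Y}.indicator
                (1 : (Fin (k + 1) → ℝ) → ℝ≥0∞)) :=
            measurable_one.indicator (hYm a)
          rw [lintegral_const_mul _ (hi.mul_const _), lintegral_mul_const _ hi,
            lintegral_indicator_one (hYm a), hyvol a ha]
          refine mul_le_mul' le_rfl ?_
          have hone : ENNReal.ofReal (|a| ^ (k + 1)) * ENNReal.ofReal (|a⁻¹| ^ (k + 1)) = 1 := by
            rw [← ENNReal.ofReal_mul (by positivity), ← mul_pow, ← abs_mul, mul_inv_cancel₀ ha]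
            simp
          refine le_of_eq ?_
          calc _ = (ENNReal.ofReal (|a| ^ (k + 1)) * ENNReal.ofReal (|a⁻¹| ^ (k + 1))) *
                (volume Y * volume F) := by ring
            _ = _ := by rw [hone, one_mul]
    _ = _ := by
        rw [lintegral_mul_const, hB_split, mul_assoc]
        exact measurable_measure_prodMk_left (hcons hB)

end Core

section IntegerVectors

open Matrix.SpecialLinearGroup in
theorem Matrix.SpecialLinearGroup.transvection_mulVec {ι : Type*} [Fintype ι] [DecidableEq ι]
    {i j : ι} (hij : i ≠ j) (c : ℤ) (w : ι → ℤ) :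
    (transvection hij c : Matrix ι ι ℤ) *ᵥ w = Function.update w i (w i + c * w j) := by
  rw [transvection_coe, Matrix.add_mulVec, Matrix.one_mulVec, Matrix.single_mulVec]
  ext l
  by_cases h : l = i
  · subst h; simp
  · simp [h]

open Matrix.SpecialLinearGroup in
/-- Every integer vector is a multiple of the first column of a matrix in `SL(n, ℤ)`. -/
theorem Matrix.SpecialLinearGroup.exists_eq_mul_column {k : ℕ} (m : Fin (k + 2) → ℤ) :
    ∃ (γ : Matrix.SpecialLinearGroup (Fin (k + 2)) ℤ) (c : ℤ), ∀ i, m i = c * γ i 0 := by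
  let S : Set (Fin (k + 2) → ℤ) :=
    {w | ∃ γ : Matrix.SpecialLinearGroup (Fin (k + 2)) ℤ,
      (γ : Matrix (Fin (k + 2)) (Fin (k + 2)) ℤ) *ᵥ w = m}
  have hS : ∀ w ∈ S, ∀ i j, i ≠ j → ∀ c : ℤ, Function.update w i (w i + c * w j) ∈ S := by
    rintro w ⟨γ, hγ⟩ i j hij c
    refine ⟨γ * (transvection hij c)⁻¹, ?_⟩
    rw [← transvection_mulVec hij, Matrix.mulVec_mulVec, ← Matrix.SpecialLinearGroup.coe_mul,
      inv_mul_cancel_right, hγ]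
  let size (w : Fin (k + 2) → ℤ) : ℕ := ∑ i, (w i).natAbs
  obtain ⟨w, hwS, hmin⟩ : ∃ w ∈ S, ∀ v ∈ S, size w ≤ size v := by
    have hne : S.Nonempty := ⟨m, 1, by simp⟩
    exact ⟨Function.argminOn size S hne, Function.argminOn_mem size S hne,
      fun v hv => Function.argminOn_le size S hv⟩
  have hred : ∀ i j, i ≠ j → w j ≠ 0 → (w i).natAbs < (w j).natAbs := by
    intro i j hij hj
    have h := hmin _ (hS w hwS i j hij (-(w i / w j)))
    simp only [size] at h
    rw [← Finset.add_sum_erase _ _ (Finset.mem_univ i),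
      ← Finset.add_sum_erase (a := i) _
        (fun x => (Function.update w i (w i + -(w i / w j) * w j) x).natAbs)
        (Finset.mem_univ i)] at h
    have h' : ∑ x ∈ Finset.univ.erase i,
        (Function.update w i (w i + -(w i / w j) * w j) x).natAbs =
        ∑ x ∈ Finset.univ.erase i, (w x).natAbs :=
      Finset.sum_congr rfl fun x hx => by
        rw [Function.update_of_ne (Finset.ne_of_mem_erase hx)]
    rw [h'] at h
    have h2 : w i + -(w i / w j) * w j = w i % w j := by
      rw [Int.emod_def]; ring
    rw [Function.update_self, h2] at h
    have h3 := Int.emod_nonneg (w i) hj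
    have h4 := Int.emod_lt_abs (w i) hj
    rw [Int.abs_eq_natAbs] at h4
    have h5 := le_of_add_le_add_right h
    omega
  obtain ⟨i, hi⟩ : ∃ i, ∀ j, j ≠ i → w j = 0 := by
    by_cases h0 : ∃ i, w i ≠ 0
    · obtain ⟨i, hi⟩ := h0
      refine ⟨i, fun j hj => ?_⟩
      by_contra hj0
      exact lt_asymm (hred i j hj.symm hj0) (hred j i hj hi)
    · push Not at h0
      exact ⟨0, fun j _ => h0 j⟩
  obtain ⟨v, hvS, hv⟩ : ∃ v ∈ S, ∀ j, j ≠ 0 → v j = 0 := by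
    by_cases hi0 : i = 0
    · exact ⟨w, hwS, by rwa [← hi0]⟩
    · have h1 := hS w hwS 0 i (Ne.symm hi0) 1
      have h2 := hS _ h1 i 0 hi0 (-1)
      refine ⟨_, h2, fun j hj => ?_⟩
      by_cases hji : j = i
      · subst hji
        simp [hi 0 (Ne.symm hi0), hj]
      · simp [hji, hj, hi j hji]
  obtain ⟨γ, hγ⟩ := hvS
  refine ⟨γ, v 0, fun l => ?_⟩
  rw [← hγ, Matrix.mulVec, dotProduct, Finset.sum_eq_single 0]
  · exact mul_comm _ _
  · intro j _ hj
    rw [hv j hj, mul_zero]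
  · simp

/-- Minkowski's theorem for the sup norm. -/
theorem Matrix.exists_int_mulVec_lt_two {n : ℕ} [NeZero n] (M : Matrix (Fin n) (Fin n) ℝ)
    (h0 : M.det ≠ 0) (h1 : |M.det| ≤ 1) :
    ∃ m : Fin n → ℤ, m ≠ 0 ∧ ∀ i, |(M *ᵥ fun j => (m j : ℝ)) i| < 2 := by
  let b := Pi.basisFun ℝ (Fin n)
  let s : Set (Fin n → ℝ) := Matrix.toLin' M ⁻¹' Set.pi Set.univ fun _ => Set.Ioo (-2) 2
  have hs : ∀ x, x ∈ s ↔ ∀ i, |(M *ᵥ x) i| < 2 := by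
    intro x
    simp [s, abs_lt]
  have hvol : volume s = ENNReal.ofReal |M.det⁻¹| * 4 ^ n := by
    have := Measure.addHaar_preimage_linearMap (volume : Measure (Fin n → ℝ))
      (f := Matrix.toLin' M) (by rwa [LinearMap.det_toLin'])
      (Set.pi Set.univ fun _ => Set.Ioo (-2) 2)
    rw [this, LinearMap.det_toLin', Real.volume_pi_Ioo]
    norm_num
  have hfund : volume (ZSpan.fundamentalDomain b) = 1 := by
    rw [ZSpan.fundamentalDomain_pi_basisFun, Real.volume_pi_Ico]
    simp
  have hlt : volume (ZSpan.fundamentalDomain b) * 2 ^ Module.finrank ℝ (Fin n → ℝ) < volume s := by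
    rw [hfund, hvol, one_mul, Module.finrank_fintype_fun_eq_card, Fintype.card_fin]
    calc (2 : ℝ≥0∞) ^ n < 4 ^ n := by
          have : (2 : ℕ) ^ n < 4 ^ n := Nat.pow_lt_pow_left (by norm_num) (NeZero.ne n)
          exact_mod_cast this
      _ ≤ ENNReal.ofReal |M.det⁻¹| * 4 ^ n := by
          refine le_mul_of_one_le_left zero_le ?_
          rw [ENNReal.one_le_ofReal, abs_inv]
          exact (one_le_inv₀ (abs_pos.2 h0)).2 h1
  have : Countable (Submodule.span ℤ (Set.range b)).toAddSubgroup :=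
    inferInstanceAs (Countable (Submodule.span ℤ (Set.range b)))
  obtain ⟨x, hx0, hx⟩ := exists_ne_zero_mem_lattice_of_measure_mul_two_pow_lt_measure
    (ZSpan.isAddFundamentalDomain' b volume)
    (fun x hx => by
      rw [hs] at hx ⊢
      simpa [Matrix.mulVec_neg] using hx)
    ((convex_pi fun _ _ => convex_Ioo _ _).linear_preimage _) hlt
  choose m hm using (b.mem_span_iff_repr_mem ℤ (x : Fin n → ℝ)).1 x.2
  have hmx : (fun j => (m j : ℝ)) = (x : Fin n → ℝ) := by
    ext j
    simpa [b] using hm j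
  refine ⟨m, ?_, by rw [hmx]; exact (hs _).1 hx⟩
  rintro rfl
  exact hx0 (Subtype.ext (by rw [← hmx]; ext; simp))

end IntegerVectors

section Bordered

variable {k : ℕ}

/-- The block matrix with rows `(1, p)` and `(0, u)`. -/
def Matrix.bordered {R : Type*} [CommRing R] (p : Fin (k + 1) → R)
    (u : Matrix (Fin (k + 1)) (Fin (k + 1)) R) : Matrix (Fin (k + 2)) (Fin (k + 2)) R :=
  Matrix.of (Fin.cons (Fin.cons 1 p) fun i => Fin.cons 0 (u i))

theorem Matrix.det_bordered {R : Type*} [CommRing R] (p : Fin (k + 1) → R)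
    (u : Matrix (Fin (k + 1)) (Fin (k + 1)) R) : (Matrix.bordered p u).det = u.det := by
  rw [Matrix.det_succ_column_zero, Fin.sum_univ_succ, Finset.sum_eq_zero, add_zero]
  · simp only [bordered, Fin.val_zero, pow_zero, Matrix.of_apply, Fin.cons_zero, one_mul]
    congr 1
  · intro i _
    simp [bordered]

theorem Matrix.mul_bordered_zero (N : Matrix (Fin (k + 2)) (Fin (k + 2)) ℝ)
    (p : Fin (k + 1) → ℝ) (u : Matrix (Fin (k + 1)) (Fin (k + 1)) ℝ) (i : Fin (k + 2)) :
    (N * Matrix.bordered p u) i 0 = N i 0 := by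
  simp [Matrix.mul_apply, bordered, Fin.sum_univ_succ]

theorem Matrix.mul_bordered_succ (N : Matrix (Fin (k + 2)) (Fin (k + 2)) ℝ)
    (p : Fin (k + 1) → ℝ) (u : Matrix (Fin (k + 1)) (Fin (k + 1)) ℝ) (i : Fin (k + 2))
    (j : Fin (k + 1)) :
    (N * Matrix.bordered p u) i j.succ = N i 0 * p j + ∑ l : Fin (k + 1), N i l.succ * u l j := by
  rw [Matrix.mul_apply, Fin.sum_univ_succ]
  simp [bordered]

theorem Matrix.core_mul_bordered (N : Matrix (Fin (k + 2)) (Fin (k + 2)) ℝ) (h : N 0 0 ≠ 0)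
    (p : Fin (k + 1) → ℝ) (u : Matrix (Fin (k + 1)) (Fin (k + 1)) ℝ) :
    (N * Matrix.bordered p u).core = N.core * u := by
  ext i j
  rw [Matrix.mul_apply]
  simp only [Matrix.core_apply, Matrix.mul_bordered_zero, Matrix.mul_bordered_succ]
  have h1 : N i.succ 0 * ((N 0 0 * p j + ∑ l : Fin (k + 1), N 0 l.succ * u l j) / N 0 0) =
      N i.succ 0 * p j + ∑ l : Fin (k + 1), N i.succ 0 * (N 0 l.succ / N 0 0) * u l j := by
    rw [add_div, mul_div_cancel_left₀ _ h, mul_add, Finset.sum_div, Finset.mul_sum]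
    congr 1
    exact Finset.sum_congr rfl fun l _ => by ring
  rw [h1, add_sub_add_left_eq_sub, ← Finset.sum_sub_distrib, Finset.mul_sum]
  exact Finset.sum_congr rfl fun l _ => by ring

/-- The real matrix underlying an element of `SL(n, ℤ)`. -/
def Matrix.SpecialLinearGroup.real {n : ℕ} (γ : Matrix.SpecialLinearGroup (Fin n) ℤ) :
    Matrix (Fin n) (Fin n) ℝ :=
  Matrix.SpecialLinearGroup.map (Int.castRingHom ℝ) γ

instance Matrix.SpecialLinearGroup.countableInt (n : ℕ) :
    Countable (Matrix.SpecialLinearGroup (Fin n) ℤ) := by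
  have : Countable (Matrix (Fin n) (Fin n) ℤ) := inferInstanceAs (Countable (Fin n → Fin n → ℤ))
  exact Subtype.countable

theorem Matrix.SpecialLinearGroup.real_apply {n : ℕ} (γ : Matrix.SpecialLinearGroup (Fin n) ℤ)
    (i j : Fin n) : γ.real i j = (γ i j : ℝ) := rfl

theorem Matrix.SpecialLinearGroup.det_real {n : ℕ} (γ : Matrix.SpecialLinearGroup (Fin n) ℤ) :
    γ.real.det = 1 := Matrix.SpecialLinearGroup.det_coe _

theorem Matrix.SpecialLinearGroup.real_mul {n : ℕ} (γ δ : Matrix.SpecialLinearGroup (Fin n) ℤ) :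
    (γ * δ).real = γ.real * δ.real := by
  rw [real, map_mul, Matrix.SpecialLinearGroup.coe_mul]
  rfl

theorem Matrix.SpecialLinearGroup.real_one {n : ℕ} :
    (1 : Matrix.SpecialLinearGroup (Fin n) ℤ).real = 1 := by
  rw [real, map_one, Matrix.SpecialLinearGroup.coe_one]

end Bordered

section ReductionTheory

variable {k : ℕ}

/-- Matrices with first column in the cube of radius `ρ`, first row reduced modulo its leading
entry, and core in `F`. -/
def Matrix.cuspSet (ρ : ℝ) (F : Set (Matrix (Fin (k + 1)) (Fin (k + 1)) ℝ)) :
    Set (Matrix (Fin (k + 2)) (Fin (k + 2)) ℝ) :=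
  {M | M 0 0 ≠ 0 ∧ (fun i => M i 0) ∈ Set.pi Set.univ (fun _ => Set.Ioo (-ρ) ρ) ∧
    (fun j : Fin (k + 1) => M 0 j.succ / M 0 0) ∈ Set.pi Set.univ (fun _ => Set.Ico (0 : ℝ) 1) ∧
    M.core ∈ F}

/-- Matrices all of whose `SL(n, ℤ)`-translates have nonzero leading entry and core in `O`. -/
def Matrix.genericSet (O : Set (Matrix (Fin (k + 1)) (Fin (k + 1)) ℝ)) :
    Set (Matrix (Fin (k + 2)) (Fin (k + 2)) ℝ) :=
  {M | ∀ γ : Matrix.SpecialLinearGroup (Fin (k + 2)) ℤ,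
    (M * γ.real) 0 0 ≠ 0 ∧ (M * γ.real).core ∈ O}

theorem Matrix.measurableSet_cuspSet (ρ : ℝ) {F : Set (Matrix (Fin (k + 1)) (Fin (k + 1)) ℝ)}
    (hF : MeasurableSet F) : MeasurableSet (Matrix.cuspSet ρ F) := by
  have hm := fun a b => Matrix.measurable_entry (m := k + 2) (n := k + 2) a b
  refine MeasurableSet.inter ?_ (MeasurableSet.inter ?_ (MeasurableSet.inter ?_ ?_))
  · exact hm 0 0 (measurableSet_singleton (0 : ℝ)).compl
  · exact (measurable_pi_lambda _ fun i => hm i 0)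
      (MeasurableSet.univ_pi fun _ => measurableSet_Ioo)
  · exact (measurable_pi_lambda _ fun j : Fin (k + 1) => (hm 0 j.succ).div (hm 0 0))
      (MeasurableSet.univ_pi fun _ => measurableSet_Ico)
  · exact Matrix.measurable_core hF

theorem Matrix.volume_cuspSet_le (ρ : ℝ) {F : Set (Matrix (Fin (k + 1)) (Fin (k + 1)) ℝ)}
    (hF : MeasurableSet F) :
    volume (Matrix.cuspSet ρ F) ≤ ENNReal.ofReal (2 * ρ) ^ (k + 2) * volume F := by
  refine (Matrix.volume_core_le _ (MeasurableSet.univ_pi fun _ => measurableSet_Ioo) _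
    (MeasurableSet.univ_pi fun _ => measurableSet_Ico) F hF).trans (le_of_eq ?_)
  rw [Real.volume_pi_Ioo, Real.volume_pi_Ico]
  simp [two_mul]

theorem Matrix.diagonal_mul_mem_cuspSet {ρ : ℝ} {F : Set (Matrix (Fin (k + 1)) (Fin (k + 1)) ℝ)}
    (hF : ∀ d : Fin (k + 1) → ℝ, (∀ i, 0 < d i ∧ d i ≤ 1) → ∀ M ∈ F, Matrix.diagonal d * M ∈ F)
    (d : Fin (k + 2) → ℝ) (hd : ∀ i, 0 < d i ∧ d i ≤ 1) {M : Matrix (Fin (k + 2)) (Fin (k + 2)) ℝ}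
    (hM : M ∈ Matrix.cuspSet ρ F) : Matrix.diagonal d * M ∈ Matrix.cuspSet ρ F := by
  obtain ⟨h0, hcol, hrow, hcore⟩ := hM
  refine ⟨?_, fun i _ => ?_, fun j _ => ?_, ?_⟩
  · simpa [Matrix.diagonal_mul, (hd 0).1.ne'] using h0
  · have := hcol i trivial
    rw [Set.mem_Ioo, ← abs_lt] at this ⊢
    simp only [Matrix.diagonal_mul, abs_mul, abs_of_pos (hd i).1]
    exact (mul_le_of_le_one_left (abs_nonneg _) (hd i).2).trans_lt this
  · simpa [Matrix.diagonal_mul, mul_div_mul_left _ _ (hd 0).1.ne'] using hrow j trivial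
  · rw [Matrix.core_diagonal_mul _ _ (hd 0).1.ne']
    refine hF _ (fun i => ?_) _ hcore
    refine Fin.cases ?_ (fun i => ?_) i
    · simpa using ⟨mul_pos (hd 0).1 (hd 1).1,
        mul_le_one₀ (hd 0).2 (hd 1).1.le (hd 1).2⟩
    · simpa using hd i.succ.succ

theorem Matrix.measurableSet_genericSet {O : Set (Matrix (Fin (k + 1)) (Fin (k + 1)) ℝ)}
    (hO : MeasurableSet O) : MeasurableSet (Matrix.genericSet O) := by
  have : Matrix.genericSet O = ⋂ γ : Matrix.SpecialLinearGroup (Fin (k + 2)) ℤ,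
      (fun M : Matrix (Fin (k + 2)) (Fin (k + 2)) ℝ => M * γ.real) ⁻¹'
        {M | M 0 0 ≠ 0 ∧ M.core ∈ O} := by
    ext M
    simp [genericSet]
  rw [this]
  refine MeasurableSet.iInter fun γ => ?_
  refine (Matrix.measurePreserving_mul_right _ γ.det_real).measurable ?_
  exact (Matrix.measurable_entry 0 0 (measurableSet_singleton (0 : ℝ)).compl).inter
    (Matrix.measurable_core hO)

theorem Matrix.volume_entry_zero_eq_zero :
    volume {M : Matrix (Fin (k + 2)) (Fin (k + 2)) ℝ | M 0 0 = 0} = 0 := by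
  have h : volume ((fun v : Fin (k + 2) → ℝ => v 0) ⁻¹' {0}) = 0 :=
    Measure.pi_eval_preimage_null _ Real.volume_singleton
  exact Measure.pi_eval_preimage_null (fun _ : Fin (k + 2) => (volume : Measure (Fin (k + 2) → ℝ)))
    (i := 0) h

theorem Matrix.volume_compl_genericSet {O : Set (Matrix (Fin (k + 1)) (Fin (k + 1)) ℝ)}
    (hO : MeasurableSet O) (hnull : volume Oᶜ = 0) : volume (Matrix.genericSet O)ᶜ = 0 := by
  have hbad : volume
      {M : Matrix (Fin (k + 2)) (Fin (k + 2)) ℝ | ¬(M 0 0 ≠ 0 ∧ M.core ∈ O)} = 0 := by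
    refine measure_mono_null (t := {M | M 0 0 = 0} ∪ {M : Matrix (Fin (k + 2)) (Fin (k + 2)) ℝ |
      M 0 0 ≠ 0 ∧ (fun i => M i 0) ∈ Set.univ ∧
      (fun j : Fin (k + 1) => M 0 j.succ / M 0 0) ∈ Set.univ ∧ M.core ∈ Oᶜ}) ?_ ?_
    · intro M hM
      by_cases h : M 0 0 = 0
      · exact Or.inl h
      · exact Or.inr ⟨h, trivial, trivial, fun hc => hM ⟨h, hc⟩⟩
    · refine measure_union_null Matrix.volume_entry_zero_eq_zero (le_antisymm ?_ zero_le)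
      refine (Matrix.volume_core_le _ MeasurableSet.univ _ MeasurableSet.univ _ hO.compl).trans ?_
      rw [hnull, mul_zero]
  have : (Matrix.genericSet O)ᶜ = ⋃ γ : Matrix.SpecialLinearGroup (Fin (k + 2)) ℤ,
      (fun M : Matrix (Fin (k + 2)) (Fin (k + 2)) ℝ => M * γ.real) ⁻¹'
        {M | ¬(M 0 0 ≠ 0 ∧ M.core ∈ O)} := by
    ext M
    simp [genericSet]
  rw [this]
  refine measure_iUnion_null fun γ => ?_
  exact (Matrix.measurePreserving_mul_right _ γ.det_real).quasiMeasurePreserving.preimage_null hbad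

theorem Matrix.diagonal_mul_mem_genericSet {O : Set (Matrix (Fin (k + 1)) (Fin (k + 1)) ℝ)}
    (hO : ∀ d : Fin (k + 1) → ℝ, (∀ i, d i ≠ 0) → ∀ M ∈ O, Matrix.diagonal d * M ∈ O)
    (d : Fin (k + 2) → ℝ) (hd : ∀ i, d i ≠ 0) {M : Matrix (Fin (k + 2)) (Fin (k + 2)) ℝ}
    (hM : M ∈ Matrix.genericSet O) : Matrix.diagonal d * M ∈ Matrix.genericSet O := by
  intro γ
  obtain ⟨h0, h1⟩ := hM γ
  rw [Matrix.mul_assoc, Matrix.core_diagonal_mul _ _ (hd 0)]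
  refine ⟨by simpa [Matrix.diagonal_mul, hd 0] using h0, hO _ (fun i => ?_) _ h1⟩
  refine Fin.cases ?_ (fun i => ?_) i
  · simpa using ⟨hd 0, hd 1⟩
  · simpa using hd i.succ.succ

/-- `F` meets the `SL(n, ℤ)`-orbit of every matrix of `O` with determinant in `(0, 1]`, and both
sets are stable under suitable row scalings. -/
structure Matrix.IsReductionPair (F O : Set (Matrix (Fin (k + 1)) (Fin (k + 1)) ℝ)) : Prop where
  measurableSet_left : MeasurableSet F
  measurableSet_right : MeasurableSet O
  volume_lt_top : volume F < ∞
  volume_compl : volume Oᶜ = 0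
  diagonal_mul_left : ∀ d : Fin (k + 1) → ℝ, (∀ i, 0 < d i ∧ d i ≤ 1) →
    ∀ M ∈ F, Matrix.diagonal d * M ∈ F
  diagonal_mul_right : ∀ d : Fin (k + 1) → ℝ, (∀ i, d i ≠ 0) → ∀ M ∈ O, Matrix.diagonal d * M ∈ O
  exists_mem : ∀ M ∈ O, 0 < M.det → M.det ≤ 1 →
    ∃ γ : Matrix.SpecialLinearGroup (Fin (k + 1)) ℤ, M * γ.real ∈ F

theorem Matrix.IsReductionPair.exists_mul_mem_cuspSet
    {F O : Set (Matrix (Fin (k + 1)) (Fin (k + 1)) ℝ)} (h : Matrix.IsReductionPair F O) {ρ : ℝ}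
    {M : Matrix (Fin (k + 2)) (Fin (k + 2)) ℝ} (hM : M ∈ Matrix.genericSet O) (hpos : 0 < M.det)
    (hle : M.det ≤ 1) {m : Fin (k + 2) → ℤ} (hm : m ≠ 0)
    (hρ : ∀ i, |(M *ᵥ fun j => (m j : ℝ)) i| < ρ) :
    ∃ γ : Matrix.SpecialLinearGroup (Fin (k + 2)) ℤ, M * γ.real ∈ Matrix.cuspSet ρ F := by
  obtain ⟨γ, c, hγ⟩ := Matrix.SpecialLinearGroup.exists_eq_mul_column m
  have hc : c ≠ 0 := by
    rintro rfl
    exact hm (funext fun i => by simp [hγ])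
  set N := M * γ.real with hN
  obtain ⟨hN0, hNO⟩ := hM γ
  have hdet : N.core.det = M.det := by
    rw [Matrix.det_core _ hN0, Matrix.det_mul, γ.det_real, mul_one]
  obtain ⟨u, hu⟩ := h.exists_mem _ hNO (by rwa [hdet]) (by rwa [hdet])
  let x (j : Fin (k + 1)) : ℝ := (∑ l : Fin (k + 1), N 0 l.succ * u.real l j) / N 0 0
  let p (j : Fin (k + 1)) : ℤ := -⌊x j⌋
  let δ : Matrix.SpecialLinearGroup (Fin (k + 2)) ℤ :=
    ⟨Matrix.bordered p u, by rw [Matrix.det_bordered, u.det_coe]⟩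
  have hδ : δ.real = Matrix.bordered (fun j => (p j : ℝ)) u.real := by
    ext i j
    rw [Matrix.SpecialLinearGroup.real_apply]
    change ((Matrix.bordered p u i j : ℤ) : ℝ) = _
    refine Fin.cases ?_ (fun i => ?_) i <;> refine Fin.cases ?_ (fun j => ?_) j <;>
      simp [Matrix.bordered, Matrix.SpecialLinearGroup.real_apply]
  refine ⟨γ * δ, ?_⟩
  rw [Matrix.SpecialLinearGroup.real_mul, ← Matrix.mul_assoc, ← hN, hδ]
  refine ⟨?_, fun i _ => ?_, fun j _ => ?_, ?_⟩
  · rwa [Matrix.mul_bordered_zero]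
  · have h1 : (M *ᵥ fun j => (m j : ℝ)) i = c * N i 0 := by
      simp only [Matrix.mulVec, dotProduct, hγ, hN, Matrix.mul_apply, Finset.mul_sum, Int.cast_mul,
        Matrix.SpecialLinearGroup.real_apply]
      exact Finset.sum_congr rfl fun l _ => by ring
    have h2 := hρ i
    rw [h1, abs_mul] at h2
    have h3 : (1 : ℝ) ≤ |(c : ℝ)| := by exact_mod_cast Int.one_le_abs hc
    simp only [Matrix.mul_bordered_zero]
    rw [Set.mem_Ioo, ← abs_lt]
    exact (le_mul_of_one_le_left (abs_nonneg _) h3).trans_lt h2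
  · have h1 : (N * Matrix.bordered (fun j => (p j : ℝ)) u.real) 0 j.succ / N 0 0 =
        Int.fract (x j) := by
      rw [Matrix.mul_bordered_succ, add_div, mul_div_cancel_left₀ _ hN0, Int.fract]
      simp only [p, x]
      push_cast
      ring
    simp only [Matrix.mul_bordered_zero]
    rw [h1]
    exact ⟨Int.fract_nonneg _, Int.fract_lt_one _⟩
  · rwa [Matrix.core_mul_bordered _ hN0]

theorem Matrix.exists_isReductionPair (k : ℕ) :
    ∃ F O : Set (Matrix (Fin (k + 1)) (Fin (k + 1)) ℝ), Matrix.IsReductionPair F O := by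
  induction k with
  | zero =>
    refine ⟨{M | M 0 0 ∈ Set.Ioc 0 1}, Set.univ, ?_, MeasurableSet.univ, ?_, by simp, ?_, ?_, ?_⟩
    · exact Matrix.measurable_entry 0 0 measurableSet_Ioc
    · have h : volume (Set.pi Set.univ fun _ : Fin 1 => Set.pi Set.univ fun _ : Fin 1 =>
          Set.Ioc (0 : ℝ) 1) < ∞ := by
        rw [volume_pi_pi]
        simp [Real.volume_pi_Ioc]
      refine (measure_mono fun M hM => ?_).trans_lt h
      intro i _ j _
      rw [Fin.eq_zero i, Fin.eq_zero j]
      exact hM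
    · intro d hd M hM
      simp only [Set.mem_ofPred_eq, Matrix.diagonal_mul] at hM ⊢
      exact ⟨mul_pos (hd 0).1 hM.1, mul_le_one₀ (hd 0).2 hM.1.le hM.2⟩
    · exact fun _ _ _ _ => trivial
    · intro M _ h0 h1
      refine ⟨1, ?_⟩
      rw [Matrix.SpecialLinearGroup.real_one, Matrix.mul_one]
      rw [Matrix.det_fin_one] at h0 h1
      exact ⟨h0, h1⟩
  | succ k ih =>
    obtain ⟨F, O, h⟩ := ih
    refine ⟨Matrix.cuspSet 2 F, Matrix.genericSet O,
      Matrix.measurableSet_cuspSet 2 h.measurableSet_left,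
      Matrix.measurableSet_genericSet h.measurableSet_right, ?_,
      Matrix.volume_compl_genericSet h.measurableSet_right h.volume_compl,
      fun d hd M hM => Matrix.diagonal_mul_mem_cuspSet h.diagonal_mul_left d hd hM,
      fun d hd M hM => Matrix.diagonal_mul_mem_genericSet h.diagonal_mul_right d hd hM, ?_⟩
    · refine (Matrix.volume_cuspSet_le 2 h.measurableSet_left).trans_lt ?_
      exact ENNReal.mul_lt_top (ENNReal.pow_lt_top ENNReal.ofReal_lt_top) h.volume_lt_top
    · intro M hM h0 h1
      obtain ⟨m, hm, hρ⟩ := Matrix.exists_int_mulVec_lt_two M h0.ne' (by rwa [abs_of_pos h0])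
      exact h.exists_mul_mem_cuspSet hM h0 h1 hm hρ

end ReductionTheory

section OrbitSum

variable {G : Type*} [Group G] {Γ : Subgroup G}

/-- The sum of `f` over the representatives in `G` of a coset of `Γ`. -/
def orbitSum (Γ : Subgroup G) (f : G → ℝ≥0∞) (x : G ⧸ Γ) : ℝ≥0∞ :=
  ∑' γ : Γ, f (x.out * γ)

theorem orbitSum_mk (f : G → ℝ≥0∞) (h : G) :
    orbitSum Γ f (QuotientGroup.mk h) = ∑' γ : Γ, f (h * γ) := by
  obtain ⟨δ, hδ⟩ := QuotientGroup.mk_out_eq_mul Γ h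
  rw [orbitSum, hδ, ← (Equiv.mulLeft δ).tsum_eq fun γ : Γ => f (h * γ)]
  simp [mul_assoc]

theorem lintegral_orbitSum [MeasurableSpace G] [Countable Γ]
    (m : Measure G) {f : G → G → ℝ≥0∞} (hf : Measurable (Function.uncurry f)) (x : G ⧸ Γ) :
    ∫⁻ g, orbitSum Γ (f g) x ∂m = orbitSum Γ (fun h => ∫⁻ g, f g h ∂m) x :=
  lintegral_tsum fun _ => (hf.comp (measurable_id.prodMk measurable_const)).aemeasurable

theorem orbitSum_const_mul (c : ℝ≥0∞) (f : G → ℝ≥0∞) (x : G ⧸ Γ) :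
    orbitSum Γ (fun h => c * f h) x = c * orbitSum Γ f x :=
  ENNReal.tsum_mul_left

variable [TopologicalSpace G] [IsTopologicalGroup G] [PolishSpace G]
  [MeasurableSpace G] [BorelSpace G] [Countable Γ]

theorem measurable_orbitSum [MeasurableSpace (G ⧸ Γ)] [BorelSpace (G ⧸ Γ)]
    (hΓ : IsClosed (Γ : Set G)) {f : G → G → ℝ≥0∞} (hf : Measurable (Function.uncurry f)) :
    Measurable fun p : G × (G ⧸ Γ) => orbitSum Γ (f p.1) p.2 := by
  have : T1Space (G ⧸ Γ) := QuotientGroup.t1Space_iff.2 hΓ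
  have hsurj : Function.Surjective (Prod.map id QuotientGroup.mk : G × G → G × (G ⧸ Γ)) :=
    Function.surjective_id.prodMap QuotientGroup.mk_surjective
  have hmk : Measurable (Prod.map id QuotientGroup.mk : G × G → G × (G ⧸ Γ)) :=
    measurable_id.prodMap QuotientGroup.continuous_mk.measurable
  rw [← hmk.measurable_comp_iff_of_surjective hsurj]
  have h : (fun p : G × (G ⧸ Γ) => orbitSum Γ (f p.1) p.2) ∘ Prod.map id QuotientGroup.mk =
      fun p : G × G => ∑' γ : Γ, f p.1 (p.2 * γ) := by
    ext p
    exact orbitSum_mk _ _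
  rw [h]
  refine Measurable.tsum fun γ => ?_
  exact hf.comp (measurable_fst.prodMk (measurable_snd.mul_const _))

/-- A double counting bound: if `W` injects into `G ⧸ Γ` and `A` surjects onto `E ⊆ G ⧸ Γ`, then an
invariant probability measure `μ` on the quotient satisfies `m W⁻¹ * μ E ≤ m A`. -/
theorem measure_inv_mul_measure_le [MeasurableSpace (G ⧸ Γ)] [BorelSpace (G ⧸ Γ)]
    (hΓ : IsClosed (Γ : Set G)) (m : Measure G) [SFinite m] [m.IsMulLeftInvariant]
    [m.IsMulRightInvariant] (μ : Measure (G ⧸ Γ)) [IsProbabilityMeasure μ]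
    (hμ : ∀ (g : G) (s : Set (G ⧸ Γ)), μ ((fun x => g • x) ⁻¹' s) = μ s)
    {W : Set G} (hW : MeasurableSet W)
    (hWΓ : ∀ w ∈ W, ∀ γ ∈ Γ, w * γ ∈ W → γ = 1)
    {A : Set G} (hA : MeasurableSet A) {E : Set (G ⧸ Γ)}
    (hE : ∀ x ∈ E, ∃ g ∈ A, QuotientGroup.mk g = x) :
    m W⁻¹ * μ E ≤ m A := by
  let a : G → ℝ≥0∞ := A.indicator 1
  let w : G → ℝ≥0∞ := W.indicator 1
  have ha : Measurable a := measurable_one.indicator hA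
  have hw : Measurable w := measurable_one.indicator hW
  have hmeas : ∀ f, Measurable f → Measurable (orbitSum Γ f) := fun f hf =>
    (measurable_orbitSum hΓ (f := fun _ => f) (hf.comp measurable_snd)).comp
      (measurable_prodMk_left (x := (1 : G)))
  have hE1 : μ E ≤ ∫⁻ x, orbitSum Γ a x ∂μ := by
    refine le_trans (measure_mono fun x hx => ?_)
      ((one_mul _).symm.le.trans (mul_meas_ge_le_lintegral (hmeas a ha) 1))
    obtain ⟨g, hg, rfl⟩ := hE x hx
    change 1 ≤ orbitSum Γ a (QuotientGroup.mk g)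
    rw [orbitSum_mk]
    refine le_trans ?_ (ENNReal.le_tsum 1)
    simp [a, hg]
  have hw1 : ∀ x, orbitSum Γ w x ≤ 1 := by
    intro x
    by_cases h : ∃ γ : Γ, x.out * γ ∈ W
    · obtain ⟨γ, hγ⟩ := h
      rw [orbitSum, tsum_eq_single γ]
      · exact Set.indicator_le_self' (fun _ _ => zero_le) _
      · intro δ hδ
        refine Set.indicator_of_notMem (fun hδW => hδ ?_) _
        have := hWΓ _ hγ (γ⁻¹ * δ) (Γ.mul_mem (Γ.inv_mem γ.2) δ.2) (by simpa [mul_assoc] using hδW)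
        exact Subtype.ext (inv_mul_eq_one.1 this).symm
    · push Not at h
      rw [orbitSum, ENNReal.tsum_eq_zero.2 fun γ => Set.indicator_of_notMem (h γ) _]
      exact zero_le
  have hf₁ : Measurable (Function.uncurry fun g h => a h * w (g⁻¹ * h)) :=
    (ha.comp measurable_snd).mul (hw.comp (measurable_fst.inv.mul measurable_snd))
  have hf₂ : Measurable (Function.uncurry fun g h => a (g * h) * w h) :=
    (ha.comp (measurable_fst.mul measurable_snd)).mul (hw.comp measurable_snd)
  have h₁ : ∀ x, ∫⁻ g, orbitSum Γ (fun h => a h * w (g⁻¹ * h)) x ∂m =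
      m W⁻¹ * orbitSum Γ a x := by
    intro x
    rw [lintegral_orbitSum m hf₁, ← orbitSum_const_mul]
    congr 1
    ext h
    have hwh : Measurable fun g => w (g⁻¹ * h) := hw.comp (measurable_inv.mul_const h)
    rw [lintegral_const_mul _ hwh, mul_comm]
    congr 1
    rw [← lintegral_mul_left_eq_self _ h]
    have : ∀ g, w ((h * g)⁻¹ * h) = (W⁻¹).indicator 1 g := fun g => by
      rw [_root_.mul_inv_rev, inv_mul_cancel_right]
      rfl
    simp_rw [this]
    exact lintegral_indicator_one hW.inv
  have h₂ : ∀ x, ∫⁻ g, orbitSum Γ (fun h => a (g * h) * w h) x ∂m = m A * orbitSum Γ w x := by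
    intro x
    rw [lintegral_orbitSum m hf₂, ← orbitSum_const_mul]
    congr 1
    ext h
    have hah : Measurable fun g => a (g * h) := ha.comp (measurable_id.mul_const h)
    rw [lintegral_mul_const _ hah, lintegral_mul_right_eq_self a h]
    congr 1
    exact lintegral_indicator_one hA
  have hshift : ∀ g x, orbitSum Γ (fun h => a h * w (g⁻¹ * h)) (g • x) =
      orbitSum Γ (fun h => a (g * h) * w h) x := by
    intro g x
    obtain ⟨h, rfl⟩ := QuotientGroup.mk_surjective x
    change orbitSum Γ _ (QuotientGroup.mk (g * h)) = _
    simp [orbitSum_mk, mul_assoc]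
  calc m W⁻¹ * μ E ≤ m W⁻¹ * ∫⁻ x, orbitSum Γ a x ∂μ := by gcongr
    _ = ∫⁻ x, ∫⁻ g, orbitSum Γ (fun h => a h * w (g⁻¹ * h)) x ∂m ∂μ := by
        rw [← lintegral_const_mul _ (hmeas a ha)]
        exact lintegral_congr fun x => (h₁ x).symm
    _ = ∫⁻ g, ∫⁻ x, orbitSum Γ (fun h => a h * w (g⁻¹ * h)) x ∂μ ∂m := by
        have := (measurable_orbitSum hΓ hf₁).aemeasurable (μ := m.prod μ)
        exact (lintegral_lintegral_swap this).symm
    _ = ∫⁻ g, ∫⁻ x, orbitSum Γ (fun h => a (g * h) * w h) x ∂μ ∂m := by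
        refine lintegral_congr fun g => ?_
        have hg : MeasurePreserving (fun x : G ⧸ Γ => g • x) μ μ := by
          have hgm : Measurable (fun x : G ⧸ Γ => g • x) := (continuous_const_smul g).measurable
          exact ⟨hgm, Measure.ext fun s hs => by rw [Measure.map_apply hgm hs, hμ]⟩
        have := hg.lintegral_comp
          ((measurable_orbitSum hΓ hf₁).comp (measurable_prodMk_left (x := g)))
        exact this.symm.trans (lintegral_congr fun x => hshift g x)
    _ = ∫⁻ x, ∫⁻ g, orbitSum Γ (fun h => a (g * h) * w h) x ∂m ∂μ := by
        have := (measurable_orbitSum hΓ hf₂).aemeasurable (μ := m.prod μ)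
        exact lintegral_lintegral_swap this
    _ = m A * ∫⁻ x, orbitSum Γ w x ∂μ := by
        rw [← lintegral_const_mul _ (hmeas w hw)]
        exact lintegral_congr h₂
    _ ≤ m A * ∫⁻ _, 1 ∂μ := by
        gcongr with x
        exact hw1 x
    _ = m A := by simp

end OrbitSum

section SpecialLinear

variable {n : ℕ}

theorem SLR.isClosedEmbedding_coe :
    Topology.IsClosedEmbedding fun g : SLR n => (g : Matrix (Fin n) (Fin n) ℝ) := by
  refine ⟨⟨⟨rfl⟩, Subtype.val_injective⟩, ?_⟩
  have : Set.range (fun g : SLR n => (g : Matrix (Fin n) (Fin n) ℝ)) = {M | M.det = 1} :=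
    Subtype.range_coe
  rw [this]
  exact isClosed_eq (Continuous.matrix_det continuous_id) continuous_const

instance SLR.isTopologicalGroup : IsTopologicalGroup (SLR n) where
  continuous_mul := by
    rw [SLR.isClosedEmbedding_coe.isInducing.continuous_iff]
    exact (SLR.isClosedEmbedding_coe.continuous.comp continuous_fst).matrix_mul
      (SLR.isClosedEmbedding_coe.continuous.comp continuous_snd)
  continuous_inv := by
    rw [SLR.isClosedEmbedding_coe.isInducing.continuous_iff]
    have : (fun g : SLR n => (g : Matrix (Fin n) (Fin n) ℝ)) ∘ (fun g => g⁻¹) =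
        fun g : SLR n => (g : Matrix (Fin n) (Fin n) ℝ).adjugate := by
      ext g
      simp [Matrix.SpecialLinearGroup.coe_inv]
    rw [this]
    exact SLR.isClosedEmbedding_coe.continuous.matrix_adjugate

instance SLR.polishSpace : PolishSpace (SLR n) := by
  have : PolishSpace (Matrix (Fin n) (Fin n) ℝ) :=
    inferInstanceAs (PolishSpace (Fin n → Fin n → ℝ))
  exact SLR.isClosedEmbedding_coe.polishSpace

instance SLR.measurableSpace : MeasurableSpace (SLR n) := borel _

instance SLR.borelSpace : BorelSpace (SLR n) := ⟨rfl⟩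

instance LatticeSpace.borelSpace : BorelSpace (LatticeSpace n) := ⟨rfl⟩

instance latticeGamma.countable : Countable (latticeGamma n) := by
  have := Matrix.SpecialLinearGroup.countableInt n
  exact (Set.countable_range
    (Matrix.SpecialLinearGroup.map (n := Fin n) (Int.castRingHom ℝ))).to_subtype

theorem mem_latticeGamma_iff (g : SLR n) :
    g ∈ latticeGamma n ↔ ∀ i j, ∃ z : ℤ, (z : ℝ) = g i j := by
  constructor
  · rintro ⟨γ, rfl⟩ i j
    exact ⟨γ i j, rfl⟩
  · intro h
    choose z hz using h
    have hdet : (Matrix.of z).det = 1 := by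
      have : ((Matrix.of z).det : ℝ) = 1 := by
        rw [← g.det_coe, Int.cast_det]
        congr 1
        ext i j
        exact hz i j
      exact_mod_cast this
    refine ⟨⟨Matrix.of z, hdet⟩, ?_⟩
    ext i j
    exact hz i j

theorem isClosed_latticeGamma : IsClosed (latticeGamma n : Set (SLR n)) := by
  have : (latticeGamma n : Set (SLR n)) =
      ⋂ i, ⋂ j, (fun g : SLR n => g i j) ⁻¹' Set.range ((↑) : ℤ → ℝ) := by
    ext g
    simp [mem_latticeGamma_iff]
  rw [this]
  refine isClosed_iInter fun i => isClosed_iInter fun j => ?_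
  exact Int.isClosedEmbedding_coe_real.isClosed_range.preimage
    (SLR.isClosedEmbedding_coe.continuous.matrix_elem i j)

theorem exists_isOpen_injOn_latticeGamma :
    ∃ W : Set (SLR n), IsOpen W ∧ 1 ∈ W ∧
      ∀ w ∈ W, ∀ γ ∈ latticeGamma n, w * γ ∈ W → γ = 1 := by
  let N : Set (SLR n) := {g | ∀ i j, |g i j - (1 : Matrix (Fin n) (Fin n) ℝ) i j| < 1}
  have hN : IsOpen N := by
    have : N = ⋂ i, ⋂ j, {g : SLR n | |g i j - (1 : Matrix (Fin n) (Fin n) ℝ) i j| < 1} := by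
      ext g
      simp [N]
    rw [this]
    refine isOpen_iInter_of_finite fun i => isOpen_iInter_of_finite fun j => ?_
    exact isOpen_lt
      ((SLR.isClosedEmbedding_coe.continuous.matrix_elem i j).sub continuous_const).abs
      continuous_const
  obtain ⟨V, hV, h1, hVN⟩ := exists_open_nhds_one_split (hN.mem_nhds (by simp [N] : 1 ∈ N))
  refine ⟨V ∩ V⁻¹, hV.inter hV.inv, ⟨h1, by simpa using h1⟩, ?_⟩
  intro w hw γ hγ hwγ
  have hmem : γ ∈ N := by
    simpa using hVN w⁻¹ hw.2 (w * γ) hwγ.1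
  ext i j
  obtain ⟨z, hz⟩ := (mem_latticeGamma_iff γ).1 hγ i j
  have h := hmem i j
  rw [← hz, Matrix.one_apply] at h
  rw [← hz, Matrix.SpecialLinearGroup.coe_one, Matrix.one_apply]
  split_ifs at h ⊢
  · have : |z - 1| < 1 := by exact_mod_cast h
    rw [Int.abs_lt_one_iff, sub_eq_zero] at this
    simp [this]
  · have : |z| < 1 := by
      rw [sub_zero] at h
      exact_mod_cast h
    simp [Int.abs_lt_one_iff.1 this]

theorem Matrix.measurable_det : Measurable (Matrix.det : Matrix (Fin n) (Fin n) ℝ → ℝ) :=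
  (Continuous.matrix_det continuous_id).measurable

/-- The scaling factor `(det M)^(1/n)`. -/
def Matrix.detRoot (M : Matrix (Fin n) (Fin n) ℝ) : ℝ := M.det ^ (n : ℝ)⁻¹

theorem Matrix.detRoot_pos {M : Matrix (Fin n) (Fin n) ℝ} (h : 0 < M.det) : 0 < M.detRoot :=
  Real.rpow_pos_of_pos h _

variable [NeZero n]

theorem Matrix.detRoot_pow {M : Matrix (Fin n) (Fin n) ℝ} (h : 0 < M.det) :
    M.detRoot ^ n = M.det :=
  Real.rpow_inv_natCast_pow h.le (NeZero.ne n)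

theorem Matrix.det_inv_detRoot_smul {M : Matrix (Fin n) (Fin n) ℝ} (h : 0 < M.det) :
    (M.detRoot⁻¹ • M).det = 1 := by
  rw [Matrix.det_smul, Fintype.card_fin, inv_pow, Matrix.detRoot_pow h, inv_mul_cancel₀ h.ne']

/-- Rescaling of a matrix of positive determinant to an element of `SL(n, ℝ)`. -/
def SLR.normalize (M : Matrix (Fin n) (Fin n) ℝ) : SLR n :=
  if h : 0 < M.det then ⟨M.detRoot⁻¹ • M, Matrix.det_inv_detRoot_smul h⟩ else 1

theorem SLR.coe_normalize {M : Matrix (Fin n) (Fin n) ℝ} (h : 0 < M.det) :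
    (SLR.normalize M : Matrix (Fin n) (Fin n) ℝ) = M.detRoot⁻¹ • M := by
  exact congrArg Subtype.val (dif_pos h)

theorem SLR.normalize_mul_left (g : SLR n) {M : Matrix (Fin n) (Fin n) ℝ} (h : 0 < M.det) :
    SLR.normalize ((g : Matrix (Fin n) (Fin n) ℝ) * M) = g * SLR.normalize M := by
  have hdet : ((g : Matrix (Fin n) (Fin n) ℝ) * M).det = M.det := by simp
  refine Subtype.ext ?_
  rw [coe_normalize (by rwa [hdet]), Matrix.SpecialLinearGroup.coe_mul, coe_normalize h,
    Matrix.mul_smul, Matrix.detRoot, hdet, Matrix.detRoot]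

theorem SLR.normalize_mul_right (g : SLR n) {M : Matrix (Fin n) (Fin n) ℝ} (h : 0 < M.det) :
    SLR.normalize (M * (g : Matrix (Fin n) (Fin n) ℝ)) = SLR.normalize M * g := by
  have hdet : (M * (g : Matrix (Fin n) (Fin n) ℝ)).det = M.det := by simp
  refine Subtype.ext ?_
  rw [coe_normalize (by rwa [hdet]), Matrix.SpecialLinearGroup.coe_mul, coe_normalize h,
    Matrix.smul_mul, Matrix.detRoot, hdet, Matrix.detRoot]

theorem SLR.measurable_normalize : Measurable (SLR.normalize (n := n)) := by
  rw [← SLR.isClosedEmbedding_coe.measurableEmbedding.measurable_comp_iff]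
  have : (fun g : SLR n => (g : Matrix (Fin n) (Fin n) ℝ)) ∘ SLR.normalize =
      fun M => if 0 < M.det then M.detRoot⁻¹ • M else 1 := by
    ext1 M
    by_cases h : 0 < M.det
    · simp [h, coe_normalize h]
    · simp [h, normalize]
  rw [this]
  refine Measurable.ite (Matrix.measurable_det measurableSet_Ioi) ?_ measurable_const
  refine Matrix.measurable_of_entries fun i j => ?_
  exact ((Matrix.measurable_det.pow_const _).inv).mul (Matrix.measurable_entry i j)

/-- The Haar measure on `SL(n, ℝ)` given by the volume of the cone over a set. -/
def SLR.coneMeasure (n : ℕ) [NeZero n] : Measure (SLR n) :=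
  (volume.restrict {M : Matrix (Fin n) (Fin n) ℝ | M.det ∈ Set.Ioc 0 1}).map SLR.normalize

theorem SLR.coneMeasure_apply {s : Set (SLR n)} (hs : MeasurableSet s) :
    SLR.coneMeasure n s =
      volume {M : Matrix (Fin n) (Fin n) ℝ | M.det ∈ Set.Ioc 0 1 ∧ SLR.normalize M ∈ s} := by
  rw [coneMeasure, Measure.map_apply measurable_normalize hs,
    Measure.restrict_apply (measurable_normalize hs), Set.inter_comm]
  rfl

instance SLR.sFinite_coneMeasure : SFinite (SLR.coneMeasure n) := by
  unfold coneMeasure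
  infer_instance

instance SLR.isMulLeftInvariant_coneMeasure : (SLR.coneMeasure n).IsMulLeftInvariant where
  map_mul_left_eq_self g := by
    have hg : Measurable fun x : SLR n => g * x := (continuous_const_mul g).measurable
    refine Measure.ext fun s hs => ?_
    rw [Measure.map_apply hg hs, coneMeasure_apply (hg hs), coneMeasure_apply hs]
    have := Matrix.volume_preimage_mul_left (g : Matrix (Fin n) (Fin n) ℝ) (by simp)
      {M | M.det ∈ Set.Ioc 0 1 ∧ normalize M ∈ s}
    simp only [g.det_coe, inv_one, abs_one, one_pow, ENNReal.ofReal_one, one_mul] at this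
    rw [← this]
    congr 1
    ext M
    simp only [Set.mem_preimage, Set.mem_ofPred_eq, Matrix.det_mul, g.det_coe, one_mul]
    exact and_congr_right fun h => by rw [normalize_mul_left g h.1]

instance SLR.isMulRightInvariant_coneMeasure : (SLR.coneMeasure n).IsMulRightInvariant where
  map_mul_right_eq_self g := by
    have hg : Measurable fun x : SLR n => x * g := (continuous_mul_const g).measurable
    refine Measure.ext fun s hs => ?_
    rw [Measure.map_apply hg hs, coneMeasure_apply (hg hs), coneMeasure_apply hs]
    have hmeas : MeasurableSet {M : Matrix (Fin n) (Fin n) ℝ |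
        M.det ∈ Set.Ioc 0 1 ∧ normalize M ∈ s} :=
      (Matrix.measurable_det measurableSet_Ioc).inter (measurable_normalize hs)
    rw [← (Matrix.measurePreserving_mul_right (g : Matrix (Fin n) (Fin n) ℝ)
      g.det_coe).measure_preimage hmeas.nullMeasurableSet]
    congr 1
    ext M
    simp only [Set.mem_preimage, Set.mem_ofPred_eq, Matrix.det_mul, g.det_coe, mul_one]
    exact and_congr_right fun h => by rw [normalize_mul_right g h.1]

theorem SLR.coneMeasure_ne_zero {U : Set (SLR n)} (hU : IsOpen U) (h1 : 1 ∈ U) :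
    SLR.coneMeasure n U ≠ 0 := by
  rw [coneMeasure_apply hU.measurableSet]
  obtain ⟨U', hU', rfl⟩ := isOpen_induced_iff.1 hU
  have hdet : Continuous (Matrix.det : Matrix (Fin n) (Fin n) ℝ → ℝ) :=
    Continuous.matrix_det continuous_id
  have hV : IsOpen {M : Matrix (Fin n) (Fin n) ℝ | M.det ∈ Set.Ioo 0 1} := isOpen_Ioo.preimage hdet
  have hcont : ContinuousOn (fun M : Matrix (Fin n) (Fin n) ℝ => M.detRoot⁻¹ • M)
      {M | M.det ∈ Set.Ioo 0 1} := by
    refine ContinuousOn.smul (ContinuousOn.inv₀ (hdet.continuousOn.rpow_const ?_) ?_)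
      continuousOn_id
    · exact fun M hM => Or.inl hM.1.ne'
    · exact fun M hM => (Matrix.detRoot_pos hM.1).ne'
  have hopen := hcont.isOpen_inter_preimage hV hU'
  refine fun h0 => (hopen.measure_pos volume ⟨(2⁻¹ : ℝ) • 1, ?_, ?_⟩).ne'
    (measure_mono_null ?_ h0)
  · simp only [Set.mem_ofPred_eq, Matrix.det_smul, Matrix.det_one, mul_one, Fintype.card_fin]
    exact ⟨by positivity, pow_lt_one₀ (by norm_num) (by norm_num) (NeZero.ne n)⟩
  · rw [Set.mem_preimage, Matrix.detRoot, Matrix.det_smul, Matrix.det_one, mul_one,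
      Fintype.card_fin, Real.pow_rpow_inv_natCast (by norm_num) (NeZero.ne n), smul_smul]
    simpa using h1
  · rintro M ⟨hM, hMU⟩
    refine ⟨⟨hM.1, hM.2.le⟩, ?_⟩
    rw [Set.mem_preimage, coe_normalize hM.1]
    exact hMU

theorem SLR.coneMeasure_preimage_coe_le {P : Set (Matrix (Fin n) (Fin n) ℝ)} (hP : MeasurableSet P)
    {Q : Set (Matrix (Fin n) (Fin n) ℝ)}
    (hPQ : ∀ M : Matrix (Fin n) (Fin n) ℝ, ∀ t : ℝ, 0 < t → t ≤ 1 → M ∈ P → t • M ∈ Q) :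
    SLR.coneMeasure n {g | (g : Matrix (Fin n) (Fin n) ℝ) ∈ P} ≤ volume Q := by
  refine (coneMeasure_apply (SLR.isClosedEmbedding_coe.continuous.measurable hP)).trans_le
    (measure_mono ?_)
  rintro M ⟨⟨h0, h1⟩, hM⟩
  rw [Set.mem_preimage, coe_normalize h0] at hM
  have := hPQ _ M.detRoot (Matrix.detRoot_pos h0)
    (Real.rpow_le_one h0.le h1 (by positivity)) hM
  rwa [smul_smul, mul_inv_cancel₀ (Matrix.detRoot_pos h0).ne', one_smul] at this

end SpecialLinear

section CuspExcursion

theorem abs_le_eNorm {n : ℕ} (v : Fin n → ℝ) (i : Fin n) : |v i| ≤ eNorm v :=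
  PiLp.norm_apply_le ((WithLp.equiv 2 (Fin n → ℝ)).symm v) i

variable {k : ℕ} {F O : Set (Matrix (Fin (k + 1)) (Fin (k + 1)) ℝ)}

/-- Every lattice with a short vector has a basis in the corresponding cusp set, unless it is
degenerate. -/
theorem Matrix.IsReductionPair.exists_representative (h : Matrix.IsReductionPair F O) {ρ : ℝ}
    {Λ : LatticeSpace (k + 2)} (hΛ : Intersects (k + 2) Λ {x | eNorm x < ρ}) :
    ∃ g ∈ {g : SLR (k + 2) | (g : Matrix (Fin (k + 2)) (Fin (k + 2)) ℝ) ∈ Matrix.cuspSet ρ F} ∪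
      {g | (g : Matrix (Fin (k + 2)) (Fin (k + 2)) ℝ) ∈ (Matrix.genericSet O)ᶜ},
      QuotientGroup.mk g = Λ := by
  obtain ⟨g, rfl⟩ := QuotientGroup.mk_surjective Λ
  by_cases hg : (g : Matrix (Fin (k + 2)) (Fin (k + 2)) ℝ) ∈ Matrix.genericSet O
  · obtain ⟨m, hm, hlt⟩ := hΛ g rfl
    obtain ⟨γ, hγ⟩ := h.exists_mul_mem_cuspSet hg (by simp) (by simp) hm
      fun i => (abs_le_eNorm _ i).trans_lt hlt
    refine ⟨g * Matrix.SpecialLinearGroup.map (Int.castRingHom ℝ) γ, Or.inl hγ, ?_⟩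
    exact QuotientGroup.mk_mul_of_mem g ⟨γ, rfl⟩
  · exact ⟨g, Or.inr hg, rfl⟩

theorem Matrix.IsReductionPair.coneMeasure_le (h : Matrix.IsReductionPair F O) (ρ : ℝ) :
    SLR.coneMeasure (k + 2)
      ({g | (g : Matrix (Fin (k + 2)) (Fin (k + 2)) ℝ) ∈ Matrix.cuspSet ρ F} ∪
        {g | (g : Matrix (Fin (k + 2)) (Fin (k + 2)) ℝ) ∈ (Matrix.genericSet O)ᶜ}) ≤
      ENNReal.ofReal (2 * ρ) ^ (k + 2) * volume F := by
  have hdiag : ∀ (M : Matrix (Fin (k + 2)) (Fin (k + 2)) ℝ) (t : ℝ),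
      t • M = Matrix.diagonal (fun _ => t) * M := fun M t => Matrix.smul_eq_diagonal_mul M t
  have hcusp := SLR.coneMeasure_preimage_coe_le
    (Matrix.measurableSet_cuspSet ρ h.measurableSet_left) (Q := Matrix.cuspSet ρ F)
    fun M t h0 h1 hM => by
      rw [hdiag]
      exact Matrix.diagonal_mul_mem_cuspSet h.diagonal_mul_left _ (fun _ => ⟨h0, h1⟩) hM
  have hgen := SLR.coneMeasure_preimage_coe_le
    (Matrix.measurableSet_genericSet h.measurableSet_right).compl (Q := (Matrix.genericSet O)ᶜ)
    fun M t h0 _ hM hc => hM <| by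
      have := Matrix.diagonal_mul_mem_genericSet h.diagonal_mul_right (fun _ => t⁻¹)
        (fun _ => inv_ne_zero h0.ne') hc
      rwa [← hdiag, smul_smul, inv_mul_cancel₀ h0.ne', one_smul] at this
  rw [Matrix.volume_compl_genericSet h.measurableSet_right h.volume_compl] at hgen
  calc _ ≤ volume (Matrix.cuspSet ρ F) + 0 := (measure_union_le _ _).trans (add_le_add hcusp hgen)
    _ ≤ _ := by
      rw [add_zero]
      exact Matrix.volume_cuspSet_le ρ h.measurableSet_left

end CuspExcursion

/-- There is a constant `D_n` such that for every `r > 0`, the measure of the set of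
unimodular lattices containing a nonzero vector of Euclidean norm `< e^{-r}` (i.e. with
`log α₁ > r`) is at most `D_n e^{-nr}`. -/
theorem measure_cusp_excursion_le (n : ℕ) (hn : 2 ≤ n)
    (μ : Measure (LatticeSpace n)) [IsProbabilityMeasure μ]
    (hinv : ∀ (g : SLR n) (s : Set (LatticeSpace n)), μ ((fun x => g • x) ⁻¹' s) = μ s) :
    ∃ D : ℝ, 0 < D ∧ ∀ r : ℝ, 0 < r →
      μ {Λ : LatticeSpace n | Intersects n Λ {x | eNorm x < Real.exp (-r)}} ≤
        ENNReal.ofReal (D * Real.exp (-(n : ℝ) * r)) := by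
  obtain ⟨k, rfl⟩ := Nat.exists_eq_add_of_le' hn
  obtain ⟨F, O, h⟩ := Matrix.exists_isReductionPair k
  obtain ⟨W, hW, h1, hWΓ⟩ := exists_isOpen_injOn_latticeGamma (n := k + 2)
  set c := SLR.coneMeasure (k + 2) W⁻¹
  have hc : c ≠ 0 := SLR.coneMeasure_ne_zero hW.inv (by simpa using h1)
  let D : ℝ≥0∞ := 2 ^ (k + 2) * volume F / c
  have hD : D ≠ ∞ := ENNReal.div_ne_top
    (ENNReal.mul_ne_top (ENNReal.pow_ne_top ENNReal.ofNat_ne_top) h.volume_lt_top.ne) hc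
  refine ⟨D.toReal + 1, by positivity, fun r _ => ?_⟩
  have hcount := measure_inv_mul_measure_le isClosed_latticeGamma (SLR.coneMeasure (k + 2)) μ hinv
    hW.measurableSet hWΓ
    ((SLR.isClosedEmbedding_coe.continuous.measurable
      (Matrix.measurableSet_cuspSet (Real.exp (-r)) h.measurableSet_left)).union
      (SLR.isClosedEmbedding_coe.continuous.measurable
        (Matrix.measurableSet_genericSet h.measurableSet_right).compl))
    (E := {Λ | Intersects (k + 2) Λ {x | eNorm x < Real.exp (-r)}})
    fun Λ hΛ => h.exists_representative hΛ
  have hle := hcount.trans (h.coneMeasure_le (Real.exp (-r)))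
  have hexp : Real.exp (-r) ^ (k + 2) = Real.exp (-((k + 2 : ℕ) : ℝ) * r) := by
    rw [← Real.exp_nat_mul]
    ring_nf
  rw [ENNReal.ofReal_mul zero_le_two, mul_pow, ← ENNReal.ofReal_pow (Real.exp_pos _).le, hexp,
    ENNReal.ofReal_ofNat, mul_right_comm] at hle
  set e := Real.exp (-((k + 2 : ℕ) : ℝ) * r)
  calc _ ≤ 2 ^ (k + 2) * volume F * ENNReal.ofReal e / c := by
        rw [ENNReal.le_div_iff_mul_le (Or.inl hc) (Or.inr ?_), mul_comm]
        · exact hle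
        · exact ENNReal.mul_ne_top
            (ENNReal.mul_ne_top (ENNReal.pow_ne_top ENNReal.ofNat_ne_top) h.volume_lt_top.ne)
            ENNReal.ofReal_ne_top
    _ = D * ENNReal.ofReal e := by
        simp only [D, div_eq_mul_inv]
        ring
    _ ≤ ENNReal.ofReal ((D.toReal + 1) * e) := by
        rw [ENNReal.ofReal_mul (by positivity)]
        gcongr
        exact (ENNReal.ofReal_toReal hD).symm.le.trans
          (ENNReal.ofReal_le_ofReal (le_add_of_nonneg_right zero_le_one))
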